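/- Let k ≥ 2 be an integer, let y be a real parameter with y ∉ {0, 1/3} and U_k((1-y)/(2y)) ≠ 0, and set ψ = (1-y)/(2y). For i ∈ [k] define α_i(x) = (U_{k-i}(x)(U_i(x) - 1) - U_{i-1}(x)(U_{k-i-1}(x) + 1))/U_k(x). Then the i-th row sum of C(y)^{-1} satisfies Σ_{j=1}^{k} (C(y)^{-1})_{ij} = α_i(ψ)/(1-3y) for every i ∈ [k]. -/

import Mathlib

/-- Evaluation of the Chebyshev polynomial of the second kind `U_n` at a real `x`. -/
noncomputable def chebU (n : ℤ) (x : ℝ) : ℝ := (Polynomial.Chebyshev.U ℝ n).eval x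

/-- The `k×k` tridiagonal matrix `C(y)` with diagonal entries `1-y`, sub- and super-diagonal
entries `-y`, and all other entries `0`. -/
def Cmat (k : ℕ) (y : ℝ) : Matrix (Fin k) (Fin k) ℝ :=
  Matrix.of fun i j =>
    if (i : ℕ) = (j : ℕ) then 1 - y
    else if (i : ℕ) + 1 = (j : ℕ) ∨ (j : ℕ) + 1 = (i : ℕ) then -y
    else 0

/-- `α_i(x) = (U_{k-i}(x)(U_i(x) - 1) - U_{i-1}(x)(U_{k-i-1}(x) + 1))/U_k(x)`. -/
noncomputable def alph (k : ℕ) (i : ℤ) (x : ℝ) : ℝ :=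
  (chebU ((k : ℤ) - i) x * (chebU i x - 1) - chebU (i - 1) x * (chebU ((k : ℤ) - i - 1) x + 1)) /
    chebU (k : ℤ) x

/-!
Up to the factor `y`, the matrix `C(y)` is the operator `f ↦ 2ψ f m - f (m - 1) - f (m + 1)` with
zero boundary values, so its inverse is the discrete Green's function
`U_{min m n} U_{k - 1 - max m n} / U_k` in 0-based indices; the jump at `m = n` is the addition
formula for `U_k`. Splitting a row sum at the diagonal leaves two partial sums of Chebyshev
polynomials, each of which telescopes after multiplication by `2ψ - 2 = (1 - 3y) / y`.
-/

section RowSums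

open Polynomial Polynomial.Chebyshev Matrix Finset

section Chebyshev

variable (R : Type*) [CommRing R]

theorem U_add (m n : ℤ) : U R (m + n) = U R m * U R n - U R (m - 1) * U R (n - 1) := by
  induction n generalizing m with
  | zero => simp
  | succ n ih =>
    rw [← add_assoc, add_right_comm, ih, add_sub_cancel_right, add_sub_cancel_right]
    linear_combination U R n * U_add_one R m - U R m * U_add_one R n
  | pred n ih =>
    have hm := U_sub_one R (m - 1)
    have hn := U_sub_one R (-n - 1)
    rw [sub_add_cancel] at hm hn
    rw [← add_sub_assoc, add_sub_right_comm, ih]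
    linear_combination U R (m - 1) * hn - U R (-n - 1) * hm

theorem two_mul_X_sub_two_mul_sum_U (n : ℕ) :
    (2 * X - 2) * ∑ m ∈ range n, U R m = U R n - U R (n - 1) - 1 := by
  induction n with
  | zero => simp
  | succ n ih =>
    rw [sum_range_succ, mul_add, ih]
    push_cast
    rw [U_add_one, add_sub_cancel_right]
    ring

/-- The Green's function of the difference operator `f ↦ 2 * X * f m - f (m - 1) - f (m + 1)`
on `{0, …, k - 1}` with zero boundary values at `-1` and `k`, multiplied by `U_k` to clear
denominators. -/
noncomputable def chebyshevGreen (k m n : ℤ) : R[X] :=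
  U R (min m n) * U R (k - 1 - max m n)

theorem chebyshevGreen_neg_one_left (k : ℤ) {n : ℤ} (hn : 0 ≤ n) :
    chebyshevGreen R k (-1) n = 0 := by
  rw [chebyshevGreen, min_eq_left (by lia), U_neg_one, zero_mul]

theorem chebyshevGreen_self_left {k n : ℤ} (hn : n < k) : chebyshevGreen R k k n = 0 := by
  rw [chebyshevGreen, max_eq_left hn.le, show k - 1 - k = -1 by ring, U_neg_one, mul_zero]

theorem chebyshevGreen_of_le {m n : ℤ} (k : ℤ) (h : m ≤ n) :
    chebyshevGreen R k m n = U R m * U R (k - 1 - n) := by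
  rw [chebyshevGreen, min_eq_left h, max_eq_right h]

theorem chebyshevGreen_of_ge {m n : ℤ} (k : ℤ) (h : n ≤ m) :
    chebyshevGreen R k m n = U R n * U R (k - 1 - m) := by
  rw [chebyshevGreen, min_eq_right h, max_eq_left h]

theorem chebyshevGreen_difference (k m n : ℤ) :
    2 * X * chebyshevGreen R k m n - chebyshevGreen R k (m - 1) n - chebyshevGreen R k (m + 1) n =
      if m = n then U R k else 0 := by
  rcases lt_trichotomy m n with hmn | rfl | hmn
  · rw [if_neg hmn.ne, chebyshevGreen_of_le R k hmn.le, chebyshevGreen_of_le R k (by lia),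
      chebyshevGreen_of_le R k (by lia), U_add_one]
    ring
  · have h_add := U_add R (m + 1) (k - 1 - m)
    rw [show m + 1 + (k - 1 - m) = k by ring, U_add_one, add_sub_cancel_right] at h_add
    rw [if_pos rfl, chebyshevGreen_of_le R k le_rfl, chebyshevGreen_of_le R k (by lia),
      chebyshevGreen_of_ge R k (by lia), h_add, show k - 1 - (m + 1) = k - 1 - m - 1 by ring]
    ring
  · rw [if_neg hmn.ne', chebyshevGreen_of_ge R k hmn.le, chebyshevGreen_of_ge R k (by lia),
      chebyshevGreen_of_ge R k (by lia), show k - 1 - (m - 1) = k - 1 - m + 1 by ring,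
      show k - 1 - (m + 1) = k - 1 - m - 1 by ring, U_add_one]
    ring

theorem sum_chebyshevGreen (i l : ℕ) :
    ∑ j ∈ range (i + 1 + l), chebyshevGreen R (i + 1 + l) i j =
      U R l * ∑ j ∈ range (i + 1), U R j + U R i * ∑ j ∈ range l, U R j := by
  rw [sum_range_add, mul_sum, mul_sum, ← sum_range_reflect (fun j : ℕ => U R i * U R j) l]
  congr 1
  · refine sum_congr rfl fun j hj => ?_
    have hji : (j : ℤ) ≤ i := by grind
    rw [chebyshevGreen_of_ge R _ hji, show (i : ℤ) + 1 + l - 1 - i = l by ring, mul_comm]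
  · refine sum_congr rfl fun j hj => ?_
    have hjl : ((l - 1 - j : ℕ) : ℤ) = (i : ℤ) + 1 + l - 1 - (i + 1 + j : ℕ) := by grind
    rw [chebyshevGreen_of_le R _ (by lia), hjl]

/-- The numerator of `α_i`, as a polynomial; `i` is the 1-based index of the paper. -/
noncomputable def alphaNumerator (k i : ℤ) : R[X] :=
  U R (k - i) * (U R i - 1) - U R (i - 1) * (U R (k - i - 1) + 1)

theorem two_mul_X_sub_two_mul_sum_chebyshevGreen {k i : ℕ} (hi : i < k) :
    (2 * X - 2) * ∑ j ∈ range k, chebyshevGreen R k i j = alphaNumerator R k (i + 1) := by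
  obtain ⟨l, rfl⟩ := Nat.exists_eq_add_of_lt hi
  rw [alphaNumerator, add_right_comm]
  push_cast
  rw [sum_chebyshevGreen, add_sub_cancel_left, add_sub_cancel_right]
  have h_sum := two_mul_X_sub_two_mul_sum_U R (i + 1)
  push_cast at h_sum
  rw [add_sub_cancel_right] at h_sum
  linear_combination U R l * h_sum + U R i * two_mul_X_sub_two_mul_sum_U R l

end Chebyshev

theorem sum_fin_ite_intCast_eq {M : Type*} [AddCommMonoid M] {k : ℕ} {m : ℤ} {f : ℤ → M}
    (hf : m ∉ Set.Ico 0 (k : ℤ) → f m = 0) :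
    ∑ j : Fin k, (if (j : ℤ) = m then f j else 0) = f m := by
  by_cases hm : m ∈ Set.Ico 0 (k : ℤ)
  · obtain ⟨n, rfl⟩ := Int.eq_ofNat_of_zero_le hm.1
    have hn : n < k := by exact_mod_cast hm.2
    rw [sum_eq_single_of_mem ⟨n, hn⟩ (mem_univ _) (by grind), if_pos rfl]
  · rw [hf hm]
    exact sum_eq_zero fun j _ => if_neg (by grind)

section Tridiagonal

variable {R : Type*} [CommRing R]

/-- The `k × k` symmetric tridiagonal Toeplitz matrix with diagonal entries `a` and
off-diagonal entries `b`. -/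
def tridiagonal (k : ℕ) (a b : R) : Matrix (Fin k) (Fin k) R :=
  of fun i j =>
    if (i : ℕ) = (j : ℕ) then a
    else if (i : ℕ) + 1 = (j : ℕ) ∨ (j : ℕ) + 1 = (i : ℕ) then b
    else 0

theorem tridiagonal_mulVec {k : ℕ} (a b : R) {f : ℤ → R} (h_left : f (-1) = 0)
    (h_right : f k = 0) (i : Fin k) :
    (tridiagonal k a b *ᵥ fun j : Fin k => f j) i =
      a * f i + b * f (i - 1) + b * f (i + 1) := by
  have h_entry (j : Fin k) : tridiagonal k a b i j * f j =
      a * (if (j : ℤ) = i then f j else 0) + b * (if (j : ℤ) = i - 1 then f j else 0) +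
        b * (if (j : ℤ) = i + 1 then f j else 0) := by
    rw [tridiagonal, of_apply]
    grind
  have hi := i.isLt
  simp only [mulVec, dotProduct, h_entry, sum_add_distrib, ← mul_sum]
  rw [sum_fin_ite_intCast_eq (by grind), sum_fin_ite_intCast_eq (by grind),
    sum_fin_ite_intCast_eq (by grind)]

/-- The matrix of values at `x` of the Green's function. -/
noncomputable def greenMatrix (k : ℕ) (x : R) : Matrix (Fin k) (Fin k) R :=
  of fun i j => (chebyshevGreen R k i j).eval x

theorem tridiagonal_mul_greenMatrix (k : ℕ) (x c : R) :
    tridiagonal k (2 * x * c) (-c) * greenMatrix k x = (c * (U R k).eval x) • 1 := by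
  ext i j
  have h_left : (chebyshevGreen R k (-1) j).eval x = 0 := by
    rw [chebyshevGreen_neg_one_left R k (by lia), eval_zero]
  have h_right : (chebyshevGreen R k k j).eval x = 0 := by
    rw [chebyshevGreen_self_left R (by exact_mod_cast j.isLt), eval_zero]
  have h_diff := congrArg (eval x) (chebyshevGreen_difference R k i j)
  simp only [eval_sub, eval_mul, eval_ofNat, eval_X, apply_ite (eval x), eval_zero] at h_diff
  calc (tridiagonal k (2 * x * c) (-c) * greenMatrix k x) i j
      = 2 * x * c * (chebyshevGreen R k i j).eval x +
          -c * (chebyshevGreen R k (i - 1) j).eval x +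
          -c * (chebyshevGreen R k (i + 1) j).eval x :=
        tridiagonal_mulVec (f := fun m => (chebyshevGreen R k m j).eval x) _ _ h_left h_right i
    _ = c * if (i : ℤ) = j then (U R k).eval x else 0 := by
        rw [← h_diff]
        ring
    _ = ((c * (U R k).eval x) • (1 : Matrix (Fin k) (Fin k) R)) i j := by
        simp [one_apply, Fin.ext_iff]

theorem two_mul_sub_two_mul_sum_greenMatrix {k : ℕ} (x : R) (i : Fin k) :
    (2 * x - 2) * ∑ j, greenMatrix k x i j = (alphaNumerator R k (i + 1)).eval x := by
  rw [← two_mul_X_sub_two_mul_sum_chebyshevGreen R i.isLt, eval_mul, eval_finsetSum,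
    ← Fin.sum_univ_eq_sum_range (fun j : ℕ => (chebyshevGreen R k i j).eval x)]
  simp [greenMatrix]

end Tridiagonal

section Inverse

variable {K : Type*} [Field K]

theorem inv_tridiagonal {k : ℕ} {x c : K} (hc : c ≠ 0) (hU : (U K k).eval x ≠ 0) :
    (tridiagonal k (2 * x * c) (-c))⁻¹ = (c * (U K k).eval x)⁻¹ • greenMatrix k x := by
  apply inv_eq_right_inv
  rw [Matrix.mul_smul, tridiagonal_mul_greenMatrix, inv_smul_smul₀ (mul_ne_zero hc hU)]

theorem row_sums_of_inverse_general [NeZero (2 : K)] (k : ℕ) {a c : K} (hc : c ≠ 0)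
    (hac : a ≠ 2 * c) (hU : (U K k).eval (a / (2 * c)) ≠ 0) (i : Fin k) :
    ∑ j, (tridiagonal k a (-c))⁻¹ i j =
      (alphaNumerator K k (i + 1)).eval (a / (2 * c)) / (U K k).eval (a / (2 * c)) /
        (a - 2 * c) := by
  set x := a / (2 * c) with hx
  have ha : a = 2 * x * c := by
    rw [hx]
    field_simp
  have hden : a - 2 * c = 2 * c * (x - 1) := by
    rw [ha]
    ring
  have hx1 : x - 1 ≠ 0 := right_ne_zero_of_mul (hden ▸ sub_ne_zero.mpr hac)
  calc ∑ j, (tridiagonal k a (-c))⁻¹ i j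
      = (c * (U K k).eval x)⁻¹ * ∑ j, greenMatrix k x i j := by
        simp only [ha, inv_tridiagonal hc hU, Matrix.smul_apply, smul_eq_mul, mul_sum]
    _ = (alphaNumerator K k (i + 1)).eval x / (U K k).eval x / (a - 2 * c) := by
        rw [← two_mul_sub_two_mul_sum_greenMatrix, hden]
        field_simp

end Inverse

theorem Cmat_eq_tridiagonal (k : ℕ) (y : ℝ) : Cmat k y = tridiagonal k (1 - y) (-y) := rfl

theorem alph_eq_eval_alphaNumerator (k : ℕ) (i : ℤ) (x : ℝ) :
    alph k i x = (alphaNumerator ℝ k i).eval x / (U ℝ k).eval x := by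
  simp [alph, alphaNumerator, chebU]

end RowSums

/-- With `ψ = (1-y)/(2y)`, the `i`-th row sum of `C(y)⁻¹` equals `α_i(ψ)/(1-3y)` for every
`i ∈ [k]` (here `i : Fin k` corresponds to the 1-based index `i+1`). -/
theorem row_sums_of_inverse (k : ℕ) (hk : 2 ≤ k) (y : ℝ) (hy0 : y ≠ 0)
    (hy3 : y ≠ 1 / 3) (hU : chebU (k : ℤ) ((1 - y) / (2 * y)) ≠ 0) :
    ∀ i : Fin k, ∑ j : Fin k, (Cmat k y)⁻¹ i j =
      alph k ((i : ℕ) + 1) ((1 - y) / (2 * y)) / (1 - 3 * y) := by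
  intro i
  rw [Cmat_eq_tridiagonal, alph_eq_eval_alphaNumerator, show 1 - 3 * y = 1 - y - 2 * y by ring]
  exact row_sums_of_inverse_general k hy0 (fun h => hy3 (by linarith)) hU i
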